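/- Let m > 2. For a = (a_1,…,a_m) ∈ (0,∞)^m define p_a(x) = (1+a_1x²)⋯(1+a_mx²) − 1, P_a(x) = p_a(x)/x² for x ≠ 0 with P_a(0) = a_1+⋯+a_m, φ_k(a) = a_k ∫_{−∞}^{∞} dx / ((1+a_kx²)√(P_a(x))) for k = 1,…,m, and A(a) = ω_m·(a_1⋯a_m)^{−1/2}, where ω_m is the (m−1)-dimensional volume of the unit sphere S^{m−1} in ℝ^m. Then the map a ↦ (φ_1(a),…,φ_m(a),A(a)) is a bijection from (0,∞)^m onto the set {(φ_1,…,φ_m,A) : φ_k ∈ (0,π) for all k, φ_1+⋯+φ_m = π, A > 0}. -/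

import Mathlib

/-!
Both halves rest on two monotonicity facts. If `a ≤ b`, `a_k = b_k` and `a ≠ b`, then
`P_a < P_b` pointwise, so `φ_k(b) < φ_k(a)` (`lawlorAngle_lt`); and the angles are invariant under
scaling `a ↦ t a` (`lawlorAngle_smul`), while `A` is homogeneous of degree `-m / 2`, so that `A`
fixes exactly the scale (`lawlorA_smul`). Moreover `∑ φ_k = π` (`sum_lawlorAngle`), because on
`(0, ∞)` the sum of `a_k` times the `k`-th integrand is the derivative of `arctan √p_a`.

Injectivity is a maximum principle: scale `b` so that `a ≤ t b` with equality in some coordinate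
`k`; if the angles agree, strict monotonicity at `k` forces `a = t b`
(`exists_smul_eq_of_lawlorAngle_eq`).

Surjectivity is Perron's method (`exists_lawlorAngle_eq`): fix one coordinate `a_z = 1` and
maximise `∑ a_k` subject to `φ_k(a) ≤ θ_k` for `k ≠ z`. The estimate `φ_k ≤ π √(a_k / a_j)`
(`lawlorAngle_le`) makes the feasible set nonempty and bounded, and at the maximiser every
constraint is an equality, since raising a single `a_k` lowers all other angles.
-/


open MeasureTheory

/-- `p_a(x) = (1+a₁x²)⋯(1+a_mx²) − 1` from Lawlor's construction. -/
def lawlorP (m : ℕ) (a : Fin m → ℝ) (x : ℝ) : ℝ :=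
  (∏ i, (1 + a i * x ^ 2)) - 1

/-- `P_a(x) = p_a(x)/x²` for `x ≠ 0`, extended by `P_a(0) = a₁ + ⋯ + a_m`. -/
noncomputable def lawlorPP (m : ℕ) (a : Fin m → ℝ) (x : ℝ) : ℝ :=
  if x = 0 then ∑ i, a i else lawlorP m a x / x ^ 2

/-- The angles `φ_k(a) = a_k ∫_{−∞}^{∞} dx/((1+a_kx²)√(P_a(x)))`. -/
noncomputable def lawlorAngle (m : ℕ) (a : Fin m → ℝ) (k : Fin m) : ℝ :=
  a k * ∫ x : ℝ, 1 / ((1 + a k * x ^ 2) * Real.sqrt (lawlorPP m a x))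

/-- The `(m−1)`-dimensional volume `ω_m` of the unit sphere `S^(m−1) ⊂ ℝ^m`. -/
noncomputable def sphereVolume (m : ℕ) : ℝ :=
  (((volume : Measure (EuclideanSpace ℝ (Fin m))).toSphere) Set.univ).toReal

/-- `A(a) = ω_m (a₁⋯a_m)^(−1/2)`. -/
noncomputable def lawlorA (m : ℕ) (a : Fin m → ℝ) : ℝ :=
  sphereVolume m * (∏ i, a i) ^ (-(1 : ℝ) / 2)

open Filter Topology

variable {m : ℕ} {a b : Fin m → ℝ}

/-! ### The function `P_a` -/

/-- `P_a(x)` dominates each parameter: the lower bound behind every estimate below. -/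
lemma le_lawlorPP (ha : ∀ i, 0 < a i) (j : Fin m) (x : ℝ) : a j ≤ lawlorPP m a x := by
  unfold lawlorPP
  split_ifs with hx
  · exact Finset.single_le_sum (fun i _ => (ha i).le) (Finset.mem_univ j)
  · have hx2 : 0 < x ^ 2 := by positivity
    rw [le_div_iff₀ hx2, lawlorP, le_sub_iff_add_le']
    calc 1 + a j * x ^ 2 = ∏ i, if i = j then 1 + a i * x ^ 2 else 1 := by simp
      _ ≤ ∏ i, (1 + a i * x ^ 2) := by
        refine Finset.prod_le_prod (fun i _ => ?_) (fun i _ => ?_)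
        · have := ha i
          split_ifs <;> positivity
        · have := mul_pos (ha i) hx2
          split_ifs <;> linarith

lemma lawlorPP_pos (ha : ∀ i, 0 < a i) (j : Fin m) (x : ℝ) : 0 < lawlorPP m a x :=
  (ha j).trans_le (le_lawlorPP ha j x)

lemma lawlorPP_lt (ha : ∀ i, 0 < a i) (hab : a < b) (x : ℝ) :
    lawlorPP m a x < lawlorPP m b x := by
  obtain ⟨hle, j, hj⟩ := Pi.lt_def.1 hab
  unfold lawlorPP
  split_ifs with hx
  · exact Finset.sum_lt_sum (fun i _ => hle i) ⟨j, Finset.mem_univ j, hj⟩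
  · have hx2 : 0 < x ^ 2 := by positivity
    refine div_lt_div_of_pos_right (sub_lt_sub_right ?_ 1) hx2
    refine Finset.prod_lt_prod (fun i _ => ?_) (fun i _ => ?_) ⟨j, Finset.mem_univ j, ?_⟩
    · have := ha i
      positivity
    · have := hle i
      gcongr
    · gcongr

lemma measurable_lawlorPP (a : Fin m → ℝ) : Measurable (lawlorPP m a) := by
  unfold lawlorPP lawlorP
  refine Measurable.ite (measurableSet_singleton 0) measurable_const ?_
  fun_prop

lemma continuous_lawlorPP (x : ℝ) : Continuous fun a : Fin m → ℝ => lawlorPP m a x := by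
  unfold lawlorPP lawlorP
  split_ifs <;> fun_prop

lemma integrable_inv_one_add_mul_sq {c : ℝ} (hc : 0 < c) :
    Integrable fun x : ℝ => (1 + c * x ^ 2)⁻¹ := by
  have h := integrable_inv_one_add_sq.comp_mul_left' (Real.sqrt_pos.2 hc).ne'
  simpa [mul_pow, Real.sq_sqrt hc.le] using h

lemma integral_inv_one_add_mul_sq {c : ℝ} (hc : 0 < c) :
    ∫ x : ℝ, (1 + c * x ^ 2)⁻¹ = Real.pi / √c := by
  have h := Measure.integral_comp_mul_left (fun x : ℝ => (1 + x ^ 2)⁻¹) (√c)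
  rw [integral_univ_inv_one_add_sq, abs_of_nonneg (by positivity)] at h
  simp only [mul_pow, Real.sq_sqrt hc.le] at h
  rw [h, smul_eq_mul, inv_mul_eq_div]

/-! ### The angle integrals: bounds, monotonicity, scaling, continuity -/

/-- The integrand of `lawlorAngle`. -/
noncomputable def lawlorIntegrand (m : ℕ) (a : Fin m → ℝ) (k : Fin m) (x : ℝ) : ℝ :=
  1 / ((1 + a k * x ^ 2) * √(lawlorPP m a x))

lemma lawlorIntegrand_pos (ha : ∀ i, 0 < a i) (k : Fin m) (x : ℝ) :
    0 < lawlorIntegrand m a k x := by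
  have h1 := lawlorPP_pos ha k x
  have h2 := ha k
  unfold lawlorIntegrand
  positivity

lemma measurable_lawlorIntegrand (a : Fin m → ℝ) (k : Fin m) :
    Measurable (lawlorIntegrand m a k) := by
  have := measurable_lawlorPP a
  unfold lawlorIntegrand
  fun_prop

/-- Domination of the integrand in terms of any lower bounds `c ≤ a_k` and `d ≤ a_j`. -/
lemma lawlorIntegrand_le (ha : ∀ i, 0 < a i) (k j : Fin m) {c d : ℝ} (hc : 0 < c) (hd : 0 < d)
    (hck : c ≤ a k) (hdj : d ≤ a j) (x : ℝ) :
    lawlorIntegrand m a k x ≤ (1 + c * x ^ 2)⁻¹ * (√d)⁻¹ := by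
  have h1 := hdj.trans (le_lawlorPP ha j x)
  unfold lawlorIntegrand
  rw [one_div, ← mul_inv]
  have := Real.sqrt_pos.2 hd
  have := ha k
  gcongr

lemma integrable_lawlorIntegrand (ha : ∀ i, 0 < a i) (k : Fin m) :
    Integrable (lawlorIntegrand m a k) := by
  refine ((integrable_inv_one_add_mul_sq (ha k)).mul_const (√(a k))⁻¹).mono'
    (measurable_lawlorIntegrand a k).aestronglyMeasurable (Eventually.of_forall fun x => ?_)
  rw [Real.norm_of_nonneg (lawlorIntegrand_pos ha k x).le]
  exact lawlorIntegrand_le ha k k (ha k) (ha k) le_rfl le_rfl x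

lemma lawlorAngle_eq (a : Fin m → ℝ) (k : Fin m) :
    lawlorAngle m a k = a k * ∫ x, lawlorIntegrand m a k x := rfl

lemma lawlorAngle_pos (ha : ∀ i, 0 < a i) (k : Fin m) : 0 < lawlorAngle m a k := by
  refine mul_pos (ha k) ?_
  change 0 < ∫ x, lawlorIntegrand m a k x
  rw [integral_pos_iff_support_of_nonneg (fun x => (lawlorIntegrand_pos ha k x).le)
    (integrable_lawlorIntegrand ha k)]
  have : Function.support (lawlorIntegrand m a k) = Set.univ :=
    Set.eq_univ_of_forall fun x => (lawlorIntegrand_pos ha k x).ne'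
  simp [this]

/-- The angle `φ_k` is small when `a_k` is small relative to some other `a_j`. -/
lemma lawlorAngle_le (ha : ∀ i, 0 < a i) (k j : Fin m) :
    lawlorAngle m a k ≤ Real.pi * √(a k) / √(a j) := by
  have hs := Real.sqrt_pos.2 (ha k)
  have hj := Real.sqrt_pos.2 (ha j)
  calc lawlorAngle m a k
      ≤ a k * ∫ x : ℝ, (1 + a k * x ^ 2)⁻¹ * (√(a j))⁻¹ :=
        mul_le_mul_of_nonneg_left (integral_mono (integrable_lawlorIntegrand ha k)
          ((integrable_inv_one_add_mul_sq (ha k)).mul_const _)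
          (lawlorIntegrand_le ha k j (ha k) (ha j) le_rfl le_rfl)) (ha k).le
    _ = Real.pi * √(a k) / √(a j) := by
        rw [integral_mul_const, integral_inv_one_add_mul_sq (ha k)]
        field_simp
        rw [Real.sq_sqrt (ha k).le]

/-- Increasing the parameters other than `a_k` strictly decreases `φ_k`. -/
lemma lawlorAngle_lt (ha : ∀ i, 0 < a i) (hab : a < b) {k : Fin m} (hk : a k = b k) :
    lawlorAngle m b k < lawlorAngle m a k := by
  have hb : ∀ i, 0 < b i := fun i => (ha i).trans_le (hab.le i)
  have hlt : ∀ x, lawlorIntegrand m b k x < lawlorIntegrand m a k x := by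
    intro x
    have h1 := lawlorPP_lt ha hab x
    have h2 := lawlorPP_pos ha k x
    have h3 := ha k
    have h4 := Real.sqrt_lt_sqrt h2.le h1
    have h5 := Real.sqrt_pos.2 h2
    unfold lawlorIntegrand
    rw [← hk]
    gcongr
  have hia := integrable_lawlorIntegrand ha k
  have hib := integrable_lawlorIntegrand hb k
  have hle : (lawlorIntegrand m b k) ≤ᵐ[volume] (lawlorIntegrand m a k) :=
    Eventually.of_forall fun x => (hlt x).le
  rw [lawlorAngle_eq, lawlorAngle_eq, ← hk]
  refine mul_lt_mul_of_pos_left (lt_of_le_of_ne (integral_mono_ae hib hia hle) fun h => ?_) (ha k)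
  obtain ⟨x, hx⟩ := ((integral_eq_iff_of_ae_le hib hia hle).1 h).exists
  exact (hlt x).ne hx

lemma lawlorAngle_anti (ha : ∀ i, 0 < a i) (hab : a ≤ b) {k : Fin m} (hk : a k = b k) :
    lawlorAngle m b k ≤ lawlorAngle m a k := by
  rcases hab.eq_or_lt with rfl | h
  · exact le_rfl
  · exact (lawlorAngle_lt ha h hk).le

/-- The angles are invariant under scaling, by the substitution `x ↦ √t x`. -/
lemma lawlorAngle_smul (a : Fin m → ℝ) (k : Fin m) {t : ℝ} (ht : 0 < t) :
    lawlorAngle m (t • a) k = lawlorAngle m a k := by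
  obtain ⟨s, hs, rfl⟩ : ∃ s : ℝ, 0 < s ∧ t = s ^ 2 :=
    ⟨√t, Real.sqrt_pos.2 ht, (Real.sq_sqrt ht.le).symm⟩
  have hP : ∀ x, lawlorPP m (s ^ 2 • a) x = s ^ 2 * lawlorPP m a (s * x) := by
    intro x
    by_cases hx : x = 0
    · simp [lawlorPP, hx, Finset.mul_sum]
    · have hp : lawlorP m (s ^ 2 • a) x = lawlorP m a (s * x) := by
        simp only [lawlorP, Pi.smul_apply, smul_eq_mul]
        congr 1
        exact Finset.prod_congr rfl fun i _ => by ring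
      simp only [lawlorPP, hx, mul_eq_zero, hs.ne', or_self, if_false, hp]
      field_simp
  have hI : ∀ x, lawlorIntegrand m (s ^ 2 • a) k x = s⁻¹ * lawlorIntegrand m a k (s * x) := by
    intro x
    rw [lawlorIntegrand, lawlorIntegrand, hP, Real.sqrt_mul (by positivity), Real.sqrt_sq hs.le,
      Pi.smul_apply, smul_eq_mul, show s ^ 2 * a k * x ^ 2 = a k * (s * x) ^ 2 by ring]
    simp only [one_div, mul_inv]
    ring
  have h := Measure.integral_comp_mul_left (lawlorIntegrand m a k) s
  rw [abs_of_pos (by positivity), smul_eq_mul] at h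
  simp_rw [lawlorAngle_eq, hI]
  rw [integral_const_mul, h, Pi.smul_apply, smul_eq_mul]
  field_simp

/-- Dominated convergence on the neighbourhood `{b | a_k / 2 < b_k, 0 < b}` of `a`. -/
lemma continuousAt_lawlorAngle (ha : ∀ i, 0 < a i) (k : Fin m) :
    ContinuousAt (fun a => lawlorAngle m a k) a := by
  have hk2 := half_pos (ha k)
  have hpos : ∀ᶠ b : Fin m → ℝ in 𝓝 a, ∀ i, 0 < b i :=
    eventually_all.2 fun i => (continuous_apply i).continuousAt.eventually_const_lt (ha i)
  have hk : ∀ᶠ b : Fin m → ℝ in 𝓝 a, a k / 2 < b k :=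
    (continuous_apply k).continuousAt.eventually_const_lt (half_lt_self (ha k))
  refine (continuous_apply k).continuousAt.mul
    (continuousAt_of_dominated (F := fun a => lawlorIntegrand m a k)
      (bound := fun x => (1 + a k / 2 * x ^ 2)⁻¹ * (√(a k / 2))⁻¹)
      (Eventually.of_forall fun b => (measurable_lawlorIntegrand b k).aestronglyMeasurable)
      ?_ ((integrable_inv_one_add_mul_sq hk2).mul_const _) (Eventually.of_forall fun x => ?_))
  · filter_upwards [hpos, hk] with b hb hbk
    refine Eventually.of_forall fun x => ?_
    rw [Real.norm_of_nonneg (lawlorIntegrand_pos hb k x).le]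
    exact lawlorIntegrand_le hb k k hk2 hk2 hbk.le hbk.le x
  · have h1 := lawlorPP_pos ha k x
    have h2 := ha k
    have hc := continuous_lawlorPP (m := m) x
    unfold lawlorIntegrand
    refine ContinuousAt.div continuousAt_const (by fun_prop) (by positivity)

/-! ### The sum of the angles -/

/-- With `w(x) = ∏ (1 + a_i x²)`, on `(0, ∞)` the sum of `a_k` times the `k`-th integrand is the derivative of
`arctan √(w(x) - 1)`, which increases from `0` to `π / 2`. -/
lemma sum_lawlorAngle (hm : 0 < m) (ha : ∀ i, 0 < a i) : ∑ k, lawlorAngle m a k = Real.pi := by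
  set f : ℝ → ℝ := fun x => ∑ k, a k * lawlorIntegrand m a k x with hf
  set w : ℝ → ℝ := fun x => ∏ i, (1 + a i * x ^ 2) with hw
  have hsum : ∑ k, lawlorAngle m a k = ∫ x, f x := by
    rw [hf, integral_finsetSum _ fun k _ => (integrable_lawlorIntegrand ha k).const_mul _]
    simp_rw [integral_const_mul, lawlorAngle_eq]
  have habs : ∫ x, f x = 2 * ∫ x in Set.Ioi 0, f x := by
    rw [← integral_comp_abs]
    simp [hf, lawlorIntegrand, lawlorPP, lawlorP]
  have hcont : Continuous fun x => Real.arctan √(w x - 1) := by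
    have : Continuous w := by fun_prop
    exact Real.continuous_arctan.comp (by fun_prop)
  have hderiv : ∀ x ∈ Set.Ioi (0 : ℝ), HasDerivAt (fun x => Real.arctan √(w x - 1)) (f x) x := by
    intro x hx
    have hx : 0 < x := hx
    have hPP : lawlorPP m a x = (w x - 1) / x ^ 2 := by simp [lawlorPP, lawlorP, hx.ne', hw]
    have hw1 : 0 < w x - 1 := by
      have := lawlorPP_pos ha ⟨0, hm⟩ x
      rw [hPP] at this
      exact (div_pos_iff_of_pos_right (by positivity)).1 this
    have hpos : ∀ i, 0 < 1 + a i * x ^ 2 := fun i => by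
      have := ha i
      positivity
    have hdw : HasDerivAt w (w x * ∑ i, 2 * a i * x / (1 + a i * x ^ 2)) x := by
      have h := HasDerivAt.fun_finsetProd (u := Finset.univ)
        (f := fun i x => 1 + a i * x ^ 2) (f' := fun i => 2 * a i * x) (x := x) fun i _ => by
          exact (((hasDerivAt_pow 2 x).const_mul (a i)).const_add 1).congr_deriv
            (by push_cast; ring)
      refine h.congr_deriv ?_
      symm
      rw [Finset.mul_sum]
      refine Finset.sum_congr rfl fun i hi => ?_
      simp only [hw]
      rw [← Finset.mul_prod_erase _ _ hi, smul_eq_mul]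
      have := (hpos i).ne'
      field_simp
    have h := ((hdw.sub_const 1).sqrt hw1.ne').arctan
    convert h using 1
    rw [Real.sq_sqrt hw1.le]
    have hs := Real.sqrt_pos.2 hw1
    have hw0 : 0 < w x := by linarith
    simp only [hf, lawlorIntegrand, hPP]
    rw [Real.sqrt_div hw1.le, Real.sqrt_sq hx.le, add_sub_cancel, Finset.mul_sum, Finset.sum_div,
      Finset.mul_sum]
    refine Finset.sum_congr rfl fun i _ => ?_
    have := (hpos i).ne'
    field_simp
  have hlim : Tendsto (fun x => Real.arctan √(w x - 1)) atTop (𝓝 (Real.pi / 2)) := by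
    refine (Real.tendsto_arctan_atTop.mono_right nhdsWithin_le_nhds).comp
      (Real.tendsto_sqrt_atTop.comp ?_)
    have h1 : Tendsto (fun x : ℝ => a ⟨0, hm⟩ * x ^ 2) atTop atTop :=
      (tendsto_pow_atTop two_ne_zero).const_mul_atTop (ha _)
    refine tendsto_atTop_mono' _ ?_ h1
    filter_upwards [eventually_gt_atTop 0] with x hx
    have := le_lawlorPP ha ⟨0, hm⟩ x
    rw [lawlorPP, if_neg hx.ne', le_div_iff₀ (by positivity)] at this
    exact this
  rw [hsum, habs, integral_Ioi_of_hasDerivAt_of_nonneg hcont.continuousWithinAt hderiv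
    (fun x _ => Finset.sum_nonneg fun k _ =>
      mul_nonneg (ha k).le (lawlorIntegrand_pos ha k x).le) hlim]
  simp [hw]
  ring

/-! ### The angles determine the parameters up to scale -/

/-- Maximum principle: two parameters with the same angles are proportional. With
`t = max a_k / b_k` one has `a ≤ t b` with equality in some coordinate, where `lawlorAngle_lt`
would separate the angles unless `a = t b`. -/
lemma exists_smul_eq_of_lawlorAngle_eq (hm : 0 < m) (ha : ∀ i, 0 < a i) (hb : ∀ i, 0 < b i)
    (h : ∀ k, lawlorAngle m a k = lawlorAngle m b k) : ∃ t : ℝ, 0 < t ∧ a = t • b := by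
  have : Nonempty (Fin m) := ⟨⟨0, hm⟩⟩
  obtain ⟨k, hk⟩ := Finite.exists_max fun i => a i / b i
  have ht : 0 < a k / b k := div_pos (ha k) (hb k)
  refine ⟨a k / b k, ht, ?_⟩
  have hle : a ≤ (a k / b k) • b := fun i => (div_le_iff₀ (hb i)).1 (hk i)
  refine hle.eq_or_lt.resolve_right fun hlt => ?_
  have hkk : a k = ((a k / b k) • b) k := (div_mul_cancel₀ _ (hb k).ne').symm
  have := lawlorAngle_lt ha hlt hkk
  rw [lawlorAngle_smul b k ht, h k] at this
  exact lt_irrefl _ this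

/-! ### Every admissible tuple of angles is attained -/

/-- Perron's method: normalise `a_z = 1` and maximise `∑ a_k` over the compact set of `a` with
`φ_k(a) ≤ θ_k` for `k ≠ z`. If `φ_k < θ_k` at the maximiser, then `a_k` can be increased: this
only lowers the other `φ_j` with `j ≠ z`. Hence all these inequalities are equalities. -/
lemma exists_lawlorAngle_eq (hm : 0 < m) (θ : Fin m → ℝ) (hθ : ∀ k, 0 < θ k)
    (hsum : ∑ k, θ k = Real.pi) :
    ∃ a : Fin m → ℝ, (∀ i, 0 < a i) ∧ ∀ k, lawlorAngle m a k = θ k := by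
  set z : Fin m := ⟨0, hm⟩
  have hπ := Real.pi_pos
  -- `φ_k ≤ π √a_k` and `φ_z ≤ π / √a_k` yield the lower corner `δ` and the upper bound `C`.
  set δ : Fin m → ℝ := fun k => if k = z then 1 else (θ k / Real.pi) ^ 2 with hδ
  set C : ℝ := (Real.pi / θ z) ^ 2
  have hδ0 : ∀ k, 0 < δ k := fun k => by
    have := hθ k
    simp only [hδ]
    split_ifs <;> positivity
  -- If the angles other than `φ_z` do not exceed their targets, then `φ_z ≥ θ_z`.
  have hz : ∀ a : Fin m → ℝ, (∀ i, 0 < a i) → (∀ k ≠ z, lawlorAngle m a k ≤ θ k) →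
      θ z ≤ lawlorAngle m a z := by
    intro a ha h
    have h1 := sum_lawlorAngle hm ha
    rw [← hsum, ← Finset.add_sum_erase _ _ (Finset.mem_univ z),
      ← Finset.add_sum_erase _ θ (Finset.mem_univ z)] at h1
    have h2 := Finset.sum_le_sum fun k (hk : k ∈ Finset.univ.erase z) =>
      h k (Finset.ne_of_mem_erase hk)
    linarith
  have hC : ∀ a : Fin m → ℝ, (∀ i, 0 < a i) → a z = 1 → (∀ k ≠ z, lawlorAngle m a k ≤ θ k) →
      ∀ k, a k ≤ C := by
    intro a ha haz h k
    have h1 := (hz a ha h).trans (lawlorAngle_le ha z k)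
    have hs := Real.sqrt_pos.2 (ha k)
    rw [haz, Real.sqrt_one, mul_one, le_div_iff₀ hs, mul_comm, ← le_div_iff₀ (hθ z)] at h1
    rw [← Real.sq_sqrt (ha k).le]
    exact pow_le_pow_left₀ hs.le h1 2
  set T : Set (ℝ × (Fin m → ℝ)) := {q | q.1 = 1 ∧ ∀ k, k ≠ z → q.2 k ≤ θ k} with hT
  have hTc : IsClosed T := by
    simp only [hT, Set.ofPred_and, Set.ofPred_forall]
    exact (isClosed_eq continuous_fst continuous_const).inter
      (isClosed_iInter fun k => isClosed_iInter fun _ => isClosed_le (by fun_prop) continuous_const)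
  set S : Set (Fin m → ℝ) := Set.Icc δ (fun _ => C) ∩
    (fun a => (a z, fun k => lawlorAngle m a k)) ⁻¹' T
  have hSpos : ∀ a ∈ S, ∀ i, 0 < a i := fun a ha i => (hδ0 i).trans_le (ha.1.1 i)
  have hSc : IsCompact S := by
    refine isCompact_Icc.of_isClosed_subset
      (ContinuousOn.preimage_isClosed_of_isClosed ?_ isClosed_Icc hTc) Set.inter_subset_left
    refine (continuous_apply z).continuousOn.prodMk (continuousOn_pi.2 fun k a ha => ?_)
    exact (continuousAt_lawlorAngle (fun i => (hδ0 i).trans_le (ha.1 i)) k).continuousWithinAt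
  have hδz : δ z = 1 := by simp [hδ]
  have hδS : δ ∈ S := by
    have h : ∀ k ≠ z, lawlorAngle m δ k ≤ θ k := by
      intro k hk
      refine (lawlorAngle_le hδ0 k z).trans_eq ?_
      have := hθ k
      rw [hδz, Real.sqrt_one, div_one]
      simp only [hδ, if_neg hk]
      rw [Real.sqrt_sq (by positivity)]
      field_simp
    exact ⟨⟨le_rfl, hC δ hδ0 hδz h⟩, hδz, h⟩
  obtain ⟨a, haS, hmax⟩ := hSc.exists_isMaxOn ⟨δ, hδS⟩
    (f := fun a => ∑ i, a i) (by fun_prop)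
  have ha := hSpos a haS
  obtain ⟨⟨hδa, -⟩, haz, haθ⟩ := haS
  have key : ∀ k ≠ z, lawlorAngle m a k = θ k := by
    intro k hk
    refine (haθ k hk).eq_or_lt.resolve_right fun hlt => ?_
    have hlt : lawlorAngle m a k < θ k := hlt
    have hcont : ContinuousAt (fun t => lawlorAngle m (Function.update a k t) k) (a k) := by
      have h1 : ContinuousAt (fun b => lawlorAngle m b k) (Function.update a k (a k)) := by
        rw [Function.update_eq_self]
        exact continuousAt_lawlorAngle ha k
      exact ContinuousAt.comp (f := fun t => Function.update a k t) h1
        (continuous_const.update k continuous_id).continuousAt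
    have hev : ∀ᶠ t in 𝓝 (a k), lawlorAngle m (Function.update a k t) k < θ k :=
      hcont.eventually_lt_const (by simpa using hlt)
    obtain ⟨t, ht1, ht2⟩ := ((hev.filter_mono nhdsWithin_le_nhds).and
      (self_mem_nhdsWithin : Set.Ioi (a k) ∈ 𝓝[>] (a k))).exists
    have hab : a ≤ Function.update a k t := le_update_self_iff.2 (le_of_lt ht2)
    have hb : ∀ i, 0 < Function.update a k t i := fun i => (ha i).trans_le (hab i)
    have hbz : Function.update a k t z = 1 := by
      rw [Function.update_of_ne hk.symm]
      exact haz
    have hbθ : ∀ j ≠ z, lawlorAngle m (Function.update a k t) j ≤ θ j := by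
      intro j hj
      by_cases hjk : j = k
      · rw [hjk]
        exact ht1.le
      · exact (lawlorAngle_anti ha hab (Function.update_of_ne hjk _ _).symm).trans (haθ j hj)
    have hle : ∑ i, Function.update a k t i ≤ ∑ i, a i :=
      hmax (⟨⟨hδa.trans hab, hC _ hb hbz hbθ⟩, hbz, hbθ⟩ : Function.update a k t ∈ S)
    exact absurd hle (not_le.2 (Finset.sum_lt_sum (fun i _ => hab i)
      ⟨k, Finset.mem_univ k, by simpa using ht2⟩))
  refine ⟨a, ha, fun k => ?_⟩
  by_cases hk : k = z
  · have h1 := sum_lawlorAngle hm ha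
    rw [← hsum, ← Finset.add_sum_erase _ _ (Finset.mem_univ z),
      ← Finset.add_sum_erase _ θ (Finset.mem_univ z)] at h1
    have h2 := Finset.sum_congr rfl fun k (hk : k ∈ Finset.univ.erase z) =>
      key k (Finset.ne_of_mem_erase hk)
    rw [hk]
    linarith
  · exact key k hk

/-! ### The parameter `A` and the bijection -/

lemma sphereVolume_pos (hm : 0 < m) : 0 < sphereVolume m := by
  have : Nonempty (Fin m) := ⟨⟨0, hm⟩⟩
  unfold sphereVolume
  rw [Measure.toSphere_apply_univ]
  refine ENNReal.toReal_pos ?_ ?_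
  · refine mul_ne_zero (by simp [hm.ne']) (Metric.measure_ball_pos _ _ one_pos).ne'
  · exact ENNReal.mul_ne_top (by simp) measure_ball_lt_top.ne

lemma lawlorA_smul (ha : ∀ i, 0 < a i) {t : ℝ} (ht : 0 < t) :
    lawlorA m (t • a) = (t ^ m) ^ (-(1 : ℝ) / 2) * lawlorA m a := by
  have : ∏ i, (t • a) i = t ^ m * ∏ i, a i := by
    simp [Finset.prod_mul_distrib]
  rw [lawlorA, lawlorA, this, Real.mul_rpow (by positivity)
    (Finset.prod_nonneg fun i _ => (ha i).le)]
  ring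

lemma lawlorA_pos (hm : 0 < m) (ha : ∀ i, 0 < a i) : 0 < lawlorA m a :=
  mul_pos (sphereVolume_pos hm) (Real.rpow_pos_of_pos (Finset.prod_pos fun i _ => ha i) _)

/-- The map `a ↦ (φ₁(a),…,φ_m(a),A(a))` is a bijection from `(0,∞)^m` onto the set of
`(φ₁,…,φ_m,A)` with `φ_k ∈ (0,π)`, `φ₁+⋯+φ_m = π` and `A > 0`. -/
theorem lawlor_parameters_bijective (m : ℕ) (hm : 2 < m) :
    Set.BijOn (fun a : Fin m → ℝ => ((fun k => lawlorAngle m a k, lawlorA m a) :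
        (Fin m → ℝ) × ℝ))
      {a : Fin m → ℝ | ∀ i, 0 < a i}
      {q : (Fin m → ℝ) × ℝ | (∀ k, q.1 k ∈ Set.Ioo 0 Real.pi) ∧
        (∑ k, q.1 k) = Real.pi ∧ 0 < q.2} := by
  have hm0 : 0 < m := by omega
  refine ⟨fun a ha => ⟨fun k => ⟨lawlorAngle_pos ha k, ?_⟩, sum_lawlorAngle hm0 ha,
    lawlorA_pos hm0 ha⟩, fun a ha b hb hab => ?_, ?_⟩
  · have : Nontrivial (Fin m) := Fin.nontrivial_iff_two_le.2 hm.le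
    obtain ⟨j, hj⟩ := exists_ne k
    rw [← sum_lawlorAngle hm0 ha]
    exact Finset.single_lt_sum hj (Finset.mem_univ k) (Finset.mem_univ j) (lawlorAngle_pos ha j)
      fun i _ _ => (lawlorAngle_pos ha i).le
  · obtain ⟨h1, h2⟩ := Prod.mk.inj hab
    obtain ⟨t, ht, rfl⟩ := exists_smul_eq_of_lawlorAngle_eq hm0 ha hb (congrFun h1)
    rw [lawlorA_smul hb ht, mul_eq_right₀ (lawlorA_pos hm0 hb).ne'] at h2
    have h3 : t ^ m = 1 := (Real.rpow_left_inj (z := -(1 : ℝ) / 2) (by positivity) zero_le_one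
      (by norm_num)).1 (h2.trans (Real.one_rpow _).symm)
    rw [(pow_eq_one_iff_of_nonneg ht.le hm0.ne').1 h3, one_smul]
  · rintro ⟨θ, A⟩ ⟨hθ, hsum, hA⟩
    obtain ⟨a, ha, haθ⟩ := exists_lawlorAngle_eq hm0 θ (fun k => (hθ k).1) hsum
    have hr : 0 < A / lawlorA m a := div_pos hA (lawlorA_pos hm0 ha)
    -- `A` is homogeneous of degree `-m / 2`.
    set t : ℝ := (A / lawlorA m a) ^ (-(2 : ℝ) / m) with ht_def
    have ht : 0 < t := Real.rpow_pos_of_pos hr _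
    refine ⟨t • a, fun i => mul_pos ht (ha i), Prod.ext (funext fun k => ?_) ?_⟩
    · exact (lawlorAngle_smul a k ht).trans (haθ k)
    · change lawlorA m (t • a) = A
      have hm' : (m : ℝ) ≠ 0 := by exact_mod_cast hm0.ne'
      rw [lawlorA_smul ha ht, ht_def, ← Real.rpow_natCast, ← Real.rpow_mul hr.le,
        ← Real.rpow_mul hr.le, show -(2 : ℝ) / m * m * (-1 / 2) = 1 by field_simp,
        Real.rpow_one, div_mul_cancel₀ _ (lawlorA_pos hm0 ha).ne']
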